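/- Let L, A, B, C, D be families of abelian groups indexed by pairs (u, q) of integers. Suppose: (i) for every (u, q) there are homomorphisms forming four-term sequences L(u, q+1) → A(u, q) → C(u+1, q+2) → L(u+1, q+1) and L(u, q+1) → B(u, q) → C(u+1, q+2) → L(u+1, q+1), each exact at its two middle terms; (ii) for every (u, q) there are homomorphisms forming four-term sequences L(u−1, q−1) → D(u−1, q−2) → A(u, q) → L(u, q−1) and L(u−1, q−1) → D(u−1, q−2) → B(u, q) → L(u, q−1), each exact at its two middle terms; (iii) L(u, q) = 0 unless u = 0 and q ∈ {−2, 0, 2}, with L(0, −2) ≅ ℤ, L(0, 0) ≅ ℤ ⊕ ℤ, and L(0, 2) ≅ ℤ; (iv) every A(u, q) and B(u, q) is a finitely generated abelian group, and A(u, q) and B(u, q) are nonzero for only finitely many pairs (u, q); (v) for every q ∈ ℤ, Σ_u (−1)^u · rank(A(u, q)) = Σ_u (−1)^u · rank(B(u, q)). Then A(u, q) is isomorphic to B(u, q) for every pair (u, q). -/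

import Mathlib

/-!
The degree `q` is a bystander. In degrees `u ≠ 0` one of the two exact sequences has both outer
terms zero, the first one if `u = 1` and the second one otherwise, so `A u` and `B u` are isomorphic
to the same term of `C` or `D`. Equality of the Euler characteristics then forces equality of the
ranks in the remaining degree `u = 0`. There the second sequence embeds `D (-1)` into `A 0` and into
`B 0` with torsion-free cokernels, so both have the torsion of `D (-1)`, and a finitely generated
module over a principal ideal domain is determined by its torsion and its rank.
-/

lemma eq_of_finsum_eq_of_forall_ne {α M : Type*} [AddCancelCommMonoid M] {f g : α → M} (a : α)
    (hf : f.support.Finite) (hfg : ∀ x ≠ a, f x = g x) (h : ∑ᶠ x, f x = ∑ᶠ x, g x) :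
    f a = g a := by
  have hg : g.support.Finite := (hf.insert a).subset fun x hx ↦ by
    by_cases hxa : x = a
    · exact Or.inl hxa
    · exact Or.inr (by rwa [Function.mem_support, hfg x hxa])
  have htail : ∑ᶠ (x) (_ : x ≠ a), f x = ∑ᶠ (x) (_ : x ≠ a), g x :=
    finsum_congr fun x ↦ finsum_congr (hfg x)
  rw [← add_finsum_cond_ne a hf, ← add_finsum_cond_ne a hg, htail] at h
  exact add_right_cancel h

section Torsion

variable {R M N P : Type*} [CommRing R] [AddCommGroup M] [Module R M] [AddCommGroup N] [Module R N]
  [AddCommGroup P] [Module R P]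

lemma torsion_le_ker [Module.IsTorsionFree R P] (h : N →ₗ[R] P) :
    Submodule.torsion R N ≤ LinearMap.ker h := by
  rintro x ⟨a, hax⟩
  have ha : IsRegular (a : R) := isRegular_iff_mem_nonZeroDivisors.2 a.2
  apply ha.isSMulRegular
  change (a : R) • h x = (a : R) • (0 : P)
  rw [smul_zero, ← map_smul, ← Submonoid.smul_def, hax, map_zero]

lemma comap_torsion_of_injective {g : M →ₗ[R] N} (hg : Function.Injective g) :
    (Submodule.torsion R N).comap g = Submodule.torsion R M := by
  ext x
  simp only [Submodule.mem_comap, Submodule.mem_torsion_iff, Submonoid.smul_def, ← map_smul,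
    map_eq_zero_iff g hg]

lemma map_torsion_of_injective_of_exact [Module.IsTorsionFree R P] {g : M →ₗ[R] N} {h : N →ₗ[R] P}
    (hg : Function.Injective g) (hgh : Function.Exact g h) :
    (Submodule.torsion R M).map g = Submodule.torsion R N := by
  rw [← comap_torsion_of_injective hg, Submodule.map_comap_eq_of_le]
  exact (torsion_le_ker h).trans_eq hgh.linearMap_ker_eq

end Torsion

lemma isTorsionFree_of_trivialLink {L : ℤ → Type*} [∀ q, AddCommGroup (L q)]
    (hL : ∀ q, ¬(q = -2 ∨ q = 0 ∨ q = 2) → Subsingleton (L q))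
    (hLm2 : Nonempty (L (-2) ≃+ ℤ)) (hL0 : Nonempty (L 0 ≃+ ℤ × ℤ)) (hL2 : Nonempty (L 2 ≃+ ℤ))
    (q : ℤ) : Module.IsTorsionFree ℤ (L q) := by
  by_cases hq : q = -2 ∨ q = 0 ∨ q = 2
  · obtain ⟨e⟩ := hLm2
    obtain ⟨e₀⟩ := hL0
    obtain ⟨e₂⟩ := hL2
    obtain rfl | rfl | rfl := hq
    · exact e.injective.moduleIsTorsionFree e fun n x ↦ map_zsmul e n x
    · exact e₀.injective.moduleIsTorsionFree e₀ fun n x ↦ map_zsmul e₀ n x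
    · exact e₂.injective.moduleIsTorsionFree e₂ fun n x ↦ map_zsmul e₂ n x
  · have := hL q hq
    infer_instance

lemma nonempty_linearEquiv_prod_quotient {R M : Type*} [Ring R] [AddCommGroup M] [Module R M]
    (N : Submodule R M) [Module.Projective R (M ⧸ N)] : Nonempty (M ≃ₗ[R] N × (M ⧸ N)) := by
  obtain ⟨s, hs⟩ := N.mkQ.exists_rightInverse_of_surjective N.range_mkQ
  exact ⟨((LinearMap.exact_subtype_mkQ N).splitSurjectiveEquiv N.injective_subtype ⟨s, hs⟩).1⟩

lemma nonempty_linearEquiv_of_torsion_of_finrank_eq {R M N : Type*} [CommRing R] [IsDomain R]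
    [IsPrincipalIdealRing R] [AddCommGroup M] [Module R M] [Module.Finite R M]
    [AddCommGroup N] [Module R N] [Module.Finite R N]
    (e : Submodule.torsion R M ≃ₗ[R] Submodule.torsion R N)
    (hrank : Module.finrank R M = Module.finrank R N) : Nonempty (M ≃ₗ[R] N) := by
  obtain ⟨eM⟩ := nonempty_linearEquiv_prod_quotient (Submodule.torsion R M)
  obtain ⟨eN⟩ := nonempty_linearEquiv_prod_quotient (Submodule.torsion R N)
  have hquot : Module.finrank R (M ⧸ Submodule.torsion R M) =
      Module.finrank R (N ⧸ Submodule.torsion R N) := by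
    rwa [finrank_quotient_eq_of_le_torsion le_rfl, finrank_quotient_eq_of_le_torsion le_rfl]
  exact ⟨eM.trans ((e.prodCongr (LinearEquiv.ofFinrankEq _ _ hquot)).trans eN.symm)⟩

/-- There is a sequence of `R`-linear maps `X → Y → Z → W` exact at `Y` and at `Z`. The maps are
existentially quantified since only their existence enters the argument. -/
def FourTermExact (R X Y Z W : Type*) [Ring R] [AddCommGroup X] [Module R X] [AddCommGroup Y]
    [Module R Y] [AddCommGroup Z] [Module R Z] [AddCommGroup W] [Module R W] : Prop :=
  ∃ (f : X →ₗ[R] Y) (g : Y →ₗ[R] Z) (h : Z →ₗ[R] W), Function.Exact f g ∧ Function.Exact g h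

namespace FourTermExact

lemma of_addMonoidHom {X Y Z W : Type*} [AddCommGroup X] [AddCommGroup Y] [AddCommGroup Z]
    [AddCommGroup W]
    (H : ∃ (f : X →+ Y) (g : Y →+ Z) (h : Z →+ W), Function.Exact f g ∧ Function.Exact g h) :
    FourTermExact ℤ X Y Z W := by
  obtain ⟨f, g, h, hfg, hgh⟩ := H
  exact ⟨f.toIntLinearMap, g.toIntLinearMap, h.toIntLinearMap, hfg, hgh⟩

section Ring

variable {R X Y Z W : Type*} [Ring R] [AddCommGroup X] [Module R X] [AddCommGroup Y] [Module R Y]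
  [AddCommGroup Z] [Module R Z] [AddCommGroup W] [Module R W]

lemma exists_injective_exact [Subsingleton X] (H : FourTermExact R X Y Z W) :
    ∃ (g : Y →ₗ[R] Z) (h : Z →ₗ[R] W), Function.Injective g ∧ Function.Exact g h := by
  obtain ⟨f, g, h, hfg, hgh⟩ := H
  rw [Subsingleton.elim f 0, LinearMap.exact_zero_iff_injective] at hfg
  exact ⟨g, h, hfg, hgh⟩

lemma nonempty_linearEquiv [Subsingleton X] [Subsingleton W] (H : FourTermExact R X Y Z W) :
    Nonempty (Y ≃ₗ[R] Z) := by
  obtain ⟨g, h, hg, hgh⟩ := H.exists_injective_exact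
  rw [Subsingleton.elim h 0, LinearMap.exact_zero_iff_surjective] at hgh
  exact ⟨LinearEquiv.ofBijective g ⟨hg, hgh⟩⟩

end Ring

lemma nonempty_torsion_linearEquiv {R X Y Z W : Type*} [CommRing R] [AddCommGroup X] [Module R X]
    [AddCommGroup Y] [Module R Y] [AddCommGroup Z] [Module R Z] [AddCommGroup W] [Module R W]
    [Subsingleton X] [Module.IsTorsionFree R W] (H : FourTermExact R X Y Z W) :
    Nonempty (Submodule.torsion R Y ≃ₗ[R] Submodule.torsion R Z) := by
  obtain ⟨g, h, hg, hgh⟩ := H.exists_injective_exact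
  exact ⟨(Submodule.equivMapOfInjective g hg _).trans
    (LinearEquiv.ofEq _ _ (map_torsion_of_injective_of_exact hg hgh))⟩

end FourTermExact

/-- The Euler characteristic of a `ℤ`-graded module, the alternating sum of the ranks of its
components, with junk value `0` when infinitely many of the ranks are nonzero. The family is
unbundled, unlike in `GradedObject.eulerChar`, so that a row of a bigraded group is an instance. -/
noncomputable def gradedEulerChar (R : Type*) [Ring R] (M : ℤ → Type*) [∀ u, AddCommGroup (M u)]
    [∀ u, Module R (M u)] : ℤ :=
  ∑ᶠ u : ℤ, (Int.negOnePow u : ℤ) * (Module.finrank R (M u) : ℤ)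

lemma finrank_eq_of_gradedEulerChar_eq {R : Type*} [Ring R] {A B : ℤ → Type*}
    [∀ u, AddCommGroup (A u)] [∀ u, Module R (A u)]
    [∀ u, AddCommGroup (B u)] [∀ u, Module R (B u)] (i : ℤ)
    (hA : (Function.support fun u ↦ Module.finrank R (A u)).Finite)
    (hAB : ∀ u ≠ i, Module.finrank R (A u) = Module.finrank R (B u))
    (hχ : gradedEulerChar R A = gradedEulerChar R B) :
    Module.finrank R (A i) = Module.finrank R (B i) := by
  have hsupp : (Function.support fun u : ℤ ↦
      (Int.negOnePow u : ℤ) * (Module.finrank R (A u) : ℤ)).Finite :=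
    hA.subset fun u hu ↦ by simpa using hu
  have hi := eq_of_finsum_eq_of_forall_ne i hsupp (fun u hu ↦ by rw [hAB u hu]) hχ
  exact_mod_cast mul_left_cancel₀ (Int.negOnePow i).ne_zero hi

-- `K` and `L` stand for the rows `q + 1` and `q - 1` of the homology of the trivial link.
theorem stmt6_general {R : Type*} [CommRing R] [IsDomain R] [IsPrincipalIdealRing R]
    {K L A B C D : ℤ → Type*}
    [∀ u, AddCommGroup (K u)] [∀ u, Module R (K u)] [∀ u, AddCommGroup (L u)] [∀ u, Module R (L u)]
    [∀ u, AddCommGroup (A u)] [∀ u, Module R (A u)] [∀ u, AddCommGroup (B u)] [∀ u, Module R (B u)]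
    [∀ u, AddCommGroup (C u)] [∀ u, Module R (C u)] [∀ u, AddCommGroup (D u)] [∀ u, Module R (D u)]
    (hAC : ∀ u, FourTermExact R (K u) (A u) (C (u + 1)) (K (u + 1)))
    (hBC : ∀ u, FourTermExact R (K u) (B u) (C (u + 1)) (K (u + 1)))
    (hDA : ∀ u, FourTermExact R (L (u - 1)) (D (u - 1)) (A u) (L u))
    (hDB : ∀ u, FourTermExact R (L (u - 1)) (D (u - 1)) (B u) (L u))
    (hK : ∀ u ≠ 0, Subsingleton (K u)) (hL : ∀ u ≠ 0, Subsingleton (L u))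
    [Module.IsTorsionFree R (L 0)] [Module.Finite R (A 0)] [Module.Finite R (B 0)]
    (hA : {u | Nontrivial (A u)}.Finite)
    (hχ : gradedEulerChar R A = gradedEulerChar R B) (u : ℤ) :
    Nonempty (A u ≃ₗ[R] B u) := by
  have equiv_of_ne_zero (v : ℤ) (hv : v ≠ 0) : Nonempty (A v ≃ₗ[R] B v) := by
    by_cases hv1 : v = 1
    · have := hK v hv
      have := hK (v + 1) (by lia)
      obtain ⟨a⟩ := (hAC v).nonempty_linearEquiv
      obtain ⟨b⟩ := (hBC v).nonempty_linearEquiv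
      exact ⟨a.trans b.symm⟩
    · have := hL v hv
      have := hL (v - 1) (by lia)
      obtain ⟨a⟩ := (hDA v).nonempty_linearEquiv
      obtain ⟨b⟩ := (hDB v).nonempty_linearEquiv
      exact ⟨a.symm.trans b⟩
  obtain rfl | hu := eq_or_ne u 0
  · have := hL (0 - 1) (by lia)
    obtain ⟨a⟩ := (hDA 0).nonempty_torsion_linearEquiv
    obtain ⟨b⟩ := (hDB 0).nonempty_torsion_linearEquiv
    have hsupp : (Function.support fun u ↦ Module.finrank R (A u)).Finite :=
      hA.subset fun u hu ↦ not_subsingleton_iff_nontrivial.1 fun _ ↦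
        hu Module.finrank_zero_of_subsingleton
    exact nonempty_linearEquiv_of_torsion_of_finrank_eq (a.symm.trans b)
      (finrank_eq_of_gradedEulerChar_eq 0 hsupp
        (fun v hv ↦ (equiv_of_ne_zero v hv).some.finrank_eq) hχ)
  · exact equiv_of_ne_zero u hu

/-- The complete algebraic content of the paper's main lemma: two bigraded
families `A`, `B` of finitely generated abelian groups, nonzero in only
finitely many bidegrees, fitting into the two diagrams of four-term exact
sequences with `C` and `D` over `L` (the homology of the two-component trivial
link: `ℤ` in bidegrees `(0, ±2)`, `ℤ ⊕ ℤ` in bidegree `(0, 0)`, zero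
otherwise), and with equal graded Euler characteristics, are isomorphic in
every bidegree. -/
theorem stmt6
    (L A B C D : ℤ → ℤ → Type)
    [∀ u q, AddCommGroup (L u q)] [∀ u q, AddCommGroup (A u q)]
    [∀ u q, AddCommGroup (B u q)] [∀ u q, AddCommGroup (C u q)]
    [∀ u q, AddCommGroup (D u q)]
    (hAC : ∀ u q : ℤ, ∃ (f : L u (q + 1) →+ A u q) (g : A u q →+ C (u + 1) (q + 2))
        (h : C (u + 1) (q + 2) →+ L (u + 1) (q + 1)),
        Function.Exact f g ∧ Function.Exact g h)
    (hBC : ∀ u q : ℤ, ∃ (f : L u (q + 1) →+ B u q) (g : B u q →+ C (u + 1) (q + 2))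
        (h : C (u + 1) (q + 2) →+ L (u + 1) (q + 1)),
        Function.Exact f g ∧ Function.Exact g h)
    (hDA : ∀ u q : ℤ, ∃ (f : L (u - 1) (q - 1) →+ D (u - 1) (q - 2))
        (g : D (u - 1) (q - 2) →+ A u q) (h : A u q →+ L u (q - 1)),
        Function.Exact f g ∧ Function.Exact g h)
    (hDB : ∀ u q : ℤ, ∃ (f : L (u - 1) (q - 1) →+ D (u - 1) (q - 2))
        (g : D (u - 1) (q - 2) →+ B u q) (h : B u q →+ L u (q - 1)),
        Function.Exact f g ∧ Function.Exact g h)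
    (hL : ∀ u q : ℤ, ¬(u = 0 ∧ (q = -2 ∨ q = 0 ∨ q = 2)) → Subsingleton (L u q))
    (hLm2 : Nonempty (L 0 (-2) ≃+ ℤ))
    (hL0 : Nonempty (L 0 0 ≃+ ℤ × ℤ))
    (hL2 : Nonempty (L 0 2 ≃+ ℤ))
    (hAfg : ∀ u q : ℤ, AddGroup.FG (A u q)) (hBfg : ∀ u q : ℤ, AddGroup.FG (B u q))
    (hAfin : {p : ℤ × ℤ | Nontrivial (A p.1 p.2)}.Finite)
    (hBfin : {p : ℤ × ℤ | Nontrivial (B p.1 p.2)}.Finite)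
    (hχ : ∀ q : ℤ,
      (∑ᶠ u : ℤ, (Int.negOnePow u : ℤ) * (Module.finrank ℤ (A u q) : ℤ)) =
      (∑ᶠ u : ℤ, (Int.negOnePow u : ℤ) * (Module.finrank ℤ (B u q) : ℤ))) :
    ∀ u q : ℤ, Nonempty (A u q ≃+ B u q) := by
  intro u q
  have : Module.IsTorsionFree ℤ (L 0 (q - 1)) :=
    isTorsionFree_of_trivialLink (fun r hr ↦ hL 0 r fun h ↦ hr h.2) hLm2 hL0 hL2 _
  have : Module.Finite ℤ (A 0 q) := Module.Finite.iff_addGroup_fg.2 (hAfg 0 q)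
  have : Module.Finite ℤ (B 0 q) := Module.Finite.iff_addGroup_fg.2 (hBfg 0 q)
  have hA : {v | Nontrivial (A v q)}.Finite :=
    (hAfin.image Prod.fst).subset fun v hv ↦ ⟨(v, q), hv, rfl⟩
  exact (stmt6_general (K := fun u ↦ L u (q + 1)) (L := fun u ↦ L u (q - 1)) (A := fun u ↦ A u q)
    (B := fun u ↦ B u q) (C := fun u ↦ C u (q + 2)) (D := fun u ↦ D u (q - 2))
    (fun u ↦ .of_addMonoidHom (hAC u q)) (fun u ↦ .of_addMonoidHom (hBC u q))
    (fun u ↦ .of_addMonoidHom (hDA u q)) (fun u ↦ .of_addMonoidHom (hDB u q))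
    (fun u hu ↦ hL u (q + 1) fun h ↦ hu h.1) (fun u hu ↦ hL u (q - 1) fun h ↦ hu h.1)
    hA (hχ q) u).map LinearEquiv.toAddEquiv
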